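/- Define X_t := ∑_{j=1}^{t} j^{−5/3} · exp(−∑_{k=j+1}^t 1/k) for integers t ≥ 1. Then for every integer T ≥ 1, ∑_{t=1}^T X_t^{1/2} ≤ (3/2)·(7·2^{2/3})^{1/2} · T^{2/3}. -/

import Mathlib

/-- `X t := ∑_{j=1}^{t} j^{−5/3} · exp(−∑_{k=j+1}^t 1/k)`. -/
noncomputable def X (t : ℕ) : ℝ :=
  ∑ j ∈ Finset.Icc 1 t,
    (j : ℝ) ^ (-(5/3) : ℝ) * Real.exp (-∑ k ∈ Finset.Icc (j + 1) t, (1 : ℝ) / k)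

theorem X_succ (n : ℕ) : X (n+1) = Real.exp (-(1/((n:ℝ)+1))) * X n + ((n:ℝ)+1) ^ (-(5/3) : ℝ) := by
  unfold X
  rw [Finset.sum_Icc_succ_top (by omega), Finset.mul_sum]
  congr 1
  · apply Finset.sum_congr rfl
    intro j hj
    have hj' := Finset.mem_Icc.mp hj
    rw [Finset.sum_Icc_succ_top (by omega), neg_add, Real.exp_add]
    push_cast
    ring
  · simp

theorem X_nonneg (n : ℕ) : 0 ≤ X n := by
  unfold X
  positivity

theorem cube_facts (n : ℕ) : ∃ a b : ℝ, a = ((n:ℝ)+1) ^ ((1/3):ℝ) ∧ b = (n:ℝ) ^ ((1/3):ℝ) ∧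
    0 < a ∧ 0 ≤ b ∧ b ≤ a ∧ a^3 = n+1 ∧ b^3 = n := by
  refine ⟨_, _, rfl, rfl, by positivity, by positivity, ?_, ?_, ?_⟩
  · apply Real.rpow_le_rpow <;> first | positivity | linarith
  · rw [← Real.rpow_natCast, ← Real.rpow_mul (by positivity)]; norm_num
  · rw [← Real.rpow_natCast, ← Real.rpow_mul (by positivity)]; norm_num

theorem X_bound (n : ℕ) : ((n:ℝ)+1) * X n ≤ 6 * (n:ℝ) ^ ((1/3):ℝ) := by
  induction n with
  | zero => simp [X]
  | succ n ih =>
    obtain ⟨a, b, ha, hb, ha0, hb0, hba, ha3, hb3⟩ := cube_facts n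
    rw [X_succ]
    push_cast
    rw [← ha]
    rw [← hb] at ih
    have h5 : ((n:ℝ)+1) ^ (-(5/3) : ℝ) = 1 / a^5 := by
      rw [Real.rpow_neg (by positivity), ha, ← Real.rpow_natCast, ← Real.rpow_mul (by positivity)]
      norm_num
    rw [h5, ← ha3]
    rw [← ha3] at ih
    have ha1 : 1 ≤ a^3 := by rw [ha3]; linarith [Nat.cast_nonneg (α := ℝ) n]
    have he : Real.exp (-(1/a^3)) * (a^3+1) ≤ a^3 := by
      have h1 := Real.add_one_le_exp (1/a^3)
      rw [Real.exp_neg, inv_mul_le_iff₀ (Real.exp_pos _)]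
      calc a^3+1 = (1/a^3+1) * a^3 := by field_simp; ring
        _ ≤ _ := by gcongr
    have hX := X_nonneg n
    have h2 : (a^3+1) * (1/a^5) ≤ 2 / a^2 := by
      rw [mul_one_div, div_le_div_iff₀ (by positivity) (by positivity)]
      nlinarith [mul_nonneg (sq_nonneg a) (sub_nonneg.2 ha1)]
    have h3 : 2 / a^2 ≤ 6 * (a - b) := by
      rw [div_le_iff₀ (by positivity)]
      have : (a-b)*(a^2+a*b+b^2) = 1 := by linear_combination ha3 - hb3
      nlinarith [mul_nonneg (sub_nonneg.2 hba) (mul_nonneg (sub_nonneg.2 hba) ha0.le), mul_nonneg (sub_nonneg.2 hba) (mul_nonneg (sub_nonneg.2 hba) (add_nonneg ha0.le hb0))]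
    have h4 := mul_le_mul_of_nonneg_right he hX
    linarith

theorem main_aux (T : ℕ) (K : ℝ) (hK : 0 ≤ K) (hK2 : 6 ≤ K^2) :
    ∑ t ∈ Finset.Icc 1 T, (X t) ^ ((1/2) : ℝ) ≤ (3/2) * K * (T : ℝ) ^ ((2/3) : ℝ) := by
  induction T with
  | zero => simp
  | succ n ih =>
    rw [Finset.sum_Icc_succ_top (by omega)]
    have hB := X_bound (n+1)
    have hX := X_nonneg (n+1)
    obtain ⟨a, b, ha, hb, ha0, hb0, hba, ha3, hb3⟩ := cube_facts n
    push_cast at hB ⊢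
    have e1 : ((n:ℝ)+1) ^ ((2/3) : ℝ) = a^2 := by
      rw [ha, ← Real.rpow_natCast, ← Real.rpow_mul (by positivity)]; norm_num
    have e2 : (n:ℝ) ^ ((2/3) : ℝ) = b^2 := by
      rw [hb, ← Real.rpow_natCast, ← Real.rpow_mul (by positivity)]; norm_num
    rw [e1]
    rw [e2] at ih
    rw [← ha, ← ha3] at hB
    have hs : (X (n+1)) ^ ((1/2) : ℝ) ≤ K / a := by
      rw [← Real.sqrt_eq_rpow]
      apply Real.sqrt_le_iff.2 ⟨by positivity, ?_⟩
      rw [div_pow, le_div_iff₀ (by positivity)]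
      have : a * (X (n+1) * a^2) ≤ a * 6 := by nlinarith
      linarith [le_of_mul_le_mul_left this ha0]
    have h3 : 1 / a ≤ 3/2 * (a^2 - b^2) := by
      rw [div_le_iff₀ ha0]
      have : (a-b)*(a^2+a*b+b^2) = 1 := by linear_combination ha3 - hb3
      have h6 : 0 ≤ (a-b)*((a-b)*(a+2*b)) :=
        mul_nonneg (sub_nonneg.2 hba) (mul_nonneg (sub_nonneg.2 hba) (by linarith))
      nlinarith
    have h7 := mul_le_mul_of_nonneg_left h3 hK
    rw [mul_one_div] at h7
    linarith

/-- For every integer `T ≥ 1`,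
`∑_{t=1}^T X_t^{1/2} ≤ (3/2)·(7·2^{2/3})^{1/2}·T^{2/3}`. -/
theorem stmt_6 (T : ℕ) (hT : 1 ≤ T) :
    ∑ t ∈ Finset.Icc 1 T, (X t) ^ ((1/2) : ℝ) ≤
      (3/2) * (7 * (2 : ℝ) ^ ((2/3) : ℝ)) ^ ((1/2) : ℝ) * (T : ℝ) ^ ((2/3) : ℝ) := by
  apply main_aux T _ (by positivity)
  rw [← Real.sqrt_eq_rpow, Real.sq_sqrt (by positivity)]
  have : (1:ℝ) ≤ (2 : ℝ) ^ ((2/3) : ℝ) := Real.one_le_rpow (by norm_num) (by norm_num)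
  linarith
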